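/- Let (P, ·, [·,·], ε, α) be a Hom-Poisson color algebra and let N : P → P be a Nijenhuis operator on P, i.e. an even linear map with N∘α = α∘N, N(x)·N(y) = N(N(x)·y + x·N(y) − N(x·y)), and [N(x), N(y)] = N([N(x), y] + [x, N(y)] − N([x,y])) for all homogeneous x, y. Define new operations by x ·_N y = N(x)·y + x·N(y) − N(x·y) and [x,y]_N = [N(x), y] + [x, N(y)] − N([x,y]) for homogeneous x, y. Then (P, ·_N, [·,·]_N, ε, α) is a Hom-Poisson color algebra; moreover, N is a morphism of Hom-Poisson color algebras from (P, ·_N, [·,·]_N, ε, α) onto (P, ·, [·,·], ε, α), i.e. N(x ·_N y) = N(x)·N(y), N([x,y]_N) = [N(x), N(y)], and N∘α = α∘N. -/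

import Mathlib

open scoped TensorProduct

variable {K G V : Type*} [Field K] [AddCommGroup G] [AddCommGroup V] [Module K V]

/-- A skew-symmetric bicharacter on the abelian group `G` with values in `K \ {0}`. -/
def IsBicharacter (ε : G → G → K) : Prop :=
  (∀ a b, ε a b ≠ 0) ∧ (∀ a b, ε a b * ε b a = 1) ∧
    (∀ a b c, ε a (b + c) = ε a b * ε a c) ∧
    (∀ a b c, ε (a + b) c = ε a c * ε b c)

/-- `μ` is an even bilinear map for the grading `ℬ`: `μ(ℬ a, ℬ b) ⊆ ℬ (a + b)`. -/
def IsEvenBilinear (ℬ : G → Submodule K V) (μ : V →ₗ[K] V →ₗ[K] V) : Prop :=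
  ∀ ⦃a b : G⦄ ⦃x y : V⦄, x ∈ ℬ a → y ∈ ℬ b → μ x y ∈ ℬ (a + b)

/-- `α` is an even linear map for the grading `ℬ`: `α(ℬ a) ⊆ ℬ a`. -/
def IsEvenLinear (ℬ : G → Submodule K V) (α : V →ₗ[K] V) : Prop :=
  ∀ ⦃a : G⦄ ⦃x : V⦄, x ∈ ℬ a → α x ∈ ℬ a

/-- `(V, μ, ε, α)` is a Hom-associative color algebra. -/
def IsHomAssociativeColor (ℬ : G → Submodule K V) (ε : G → G → K)
    (μ : V →ₗ[K] V →ₗ[K] V) (α : V →ₗ[K] V) : Prop :=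
  IsBicharacter ε ∧ IsEvenBilinear ℬ μ ∧ IsEvenLinear ℬ α ∧
    ∀ ⦃a b c : G⦄ ⦃x y z : V⦄, x ∈ ℬ a → y ∈ ℬ b → z ∈ ℬ c →
      μ (α x) (μ y z) = μ (μ x y) (α z)

/-- `(V, br, ε, α)` is a Hom-Lie color algebra. -/
def IsHomLieColor (ℬ : G → Submodule K V) (ε : G → G → K)
    (br : V →ₗ[K] V →ₗ[K] V) (α : V →ₗ[K] V) : Prop :=
  IsBicharacter ε ∧ IsEvenBilinear ℬ br ∧ IsEvenLinear ℬ α ∧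
    (∀ ⦃a b : G⦄ ⦃x y : V⦄, x ∈ ℬ a → y ∈ ℬ b → br x y = -(ε a b • br y x)) ∧
    (∀ ⦃a b c : G⦄ ⦃x y z : V⦄, x ∈ ℬ a → y ∈ ℬ b → z ∈ ℬ c →
      ε c a • br (α x) (br y z) + ε a b • br (α y) (br z x) +
        ε b c • br (α z) (br x y) = 0)

/-- `(V, μ, br, ε, α)` is a Hom-Poisson color algebra. -/
def IsHomPoissonColor (ℬ : G → Submodule K V) (ε : G → G → K)
    (μ br : V →ₗ[K] V →ₗ[K] V) (α : V →ₗ[K] V) : Prop :=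
  IsHomAssociativeColor ℬ ε μ α ∧ IsHomLieColor ℬ ε br α ∧
    ∀ ⦃a b c : G⦄ ⦃x y z : V⦄, x ∈ ℬ a → y ∈ ℬ b → z ∈ ℬ c →
      br (α x) (μ y z) = μ (br x y) (α z) + ε a b • μ (α y) (br x z)

/-!
After twisting `f` and `g` by `N`, the composites `f (α x) (g y z)` and `f (g x y) (α z)` become, by
the Nijenhuis identities, the images of the untwisted composites under one linear operator on
ternary operations. This operator commutes with permutations of the arguments and evaluates a
ternary operation only at the arguments and their images under `N`, which have the same degrees.
Hence Hom-associativity, the Hom-Jacobi identity and the Hom-Leibniz identity, being linear in such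
composites with coefficients that depend only on the degrees, pass to the twisted operations.
-/

section Twist

variable {R M : Type*} [CommRing R] [AddCommGroup M] [Module R M]
variable (N : M →ₗ[R] M) (f g : M →ₗ[R] M →ₗ[R] M) (F : M → M → M → M) (x y z : M)

/-- The twist `x ∘_N y = N x ∘ y + x ∘ N y - N (x ∘ y)` of a bilinear operation `f` by a linear
map `N`. -/
def nijenhuisTwist : M →ₗ[R] M →ₗ[R] M :=
  f.comp N + f.compl₂ N - f.compr₂ N

theorem nijenhuisTwist_apply : nijenhuisTwist N f x y = f (N x) y + f x (N y) - N (f x y) :=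
  rfl

/-- The ternary analogue of `nijenhuisTwist`, computing the composites of two twisted operations.
Bundled as a linear map on arbitrary functions, so that identities with scalar coefficients can be
transported by `map_add` and `map_smul`. -/
def nijenhuisTwist₃ : (M → M → M → M) →ₗ[R] (M → M → M → M) where
  toFun F x y z :=
    F (N x) (N y) z + F (N x) y (N z) + F x (N y) (N z)
      - N (F (N x) y z + F x (N y) z + F x y (N z)) + N (N (F x y z))
  map_add' F G := by
    ext x y z
    simp only [Pi.add_apply, map_add]
    abel
  map_smul' c F := by
    ext x y z
    simp only [Pi.smul_apply, map_add, map_smul, RingHom.id_apply, smul_add, smul_sub]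

theorem nijenhuisTwist₃_apply :
    nijenhuisTwist₃ N F x y z =
      F (N x) (N y) z + F (N x) y (N z) + F x (N y) (N z)
        - N (F (N x) y z + F x (N y) z + F x y (N z)) + N (N (F x y z)) :=
  rfl

theorem nijenhuisTwist₃_rotate :
    nijenhuisTwist₃ N (fun x y z => F y z x) x y z = nijenhuisTwist₃ N F y z x := by
  simp only [nijenhuisTwist₃_apply, map_add]
  abel

theorem nijenhuisTwist₃_swap :
    nijenhuisTwist₃ N (fun x y z => F y x z) x y z = nijenhuisTwist₃ N F y x z := by
  simp only [nijenhuisTwist₃_apply, map_add]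
  abel

variable {N F x y z}

theorem nijenhuisTwist₃_congr {s t u : Set M} (hs : Set.MapsTo N s s)
    (ht : Set.MapsTo N t t) (hu : Set.MapsTo N u u) {F' : M → M → M → M}
    (hF : ∀ x ∈ s, ∀ y ∈ t, ∀ z ∈ u, F x y z = F' x y z)
    (hx : x ∈ s) (hy : y ∈ t) (hz : z ∈ u) :
    nijenhuisTwist₃ N F x y z = nijenhuisTwist₃ N F' x y z := by
  simp only [nijenhuisTwist₃_apply, hF, hx, hy, hz, hs hx, ht hy, hu hz]

variable {α : M →ₗ[R] M}

theorem nijenhuisTwist_comp_right (hNα : N.comp α = α.comp N)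
    (hf : f (N (α x)) (N (g y z)) = N (nijenhuisTwist N f (α x) (g y z)))
    (hg : g (N y) (N z) = N (nijenhuisTwist N g y z)) :
    nijenhuisTwist N f (α x) (nijenhuisTwist N g y z) =
      nijenhuisTwist₃ N (fun x y z => f (α x) (g y z)) x y z := by
  have hα : N (α x) = α (N x) := LinearMap.congr_fun hNα x
  rw [nijenhuisTwist_apply N f, ← hg]
  simp only [nijenhuisTwist_apply, nijenhuisTwist₃_apply, map_add, map_sub, hα] at hf ⊢
  rw [hf]
  abel

theorem nijenhuisTwist_comp_left (hNα : N.comp α = α.comp N)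
    (hf : f (N (g x y)) (N (α z)) = N (nijenhuisTwist N f (g x y) (α z)))
    (hg : g (N x) (N y) = N (nijenhuisTwist N g x y)) :
    nijenhuisTwist N f (nijenhuisTwist N g x y) (α z) =
      nijenhuisTwist₃ N (fun x y z => f (g x y) (α z)) x y z := by
  have hα : N (α z) = α (N z) := LinearMap.congr_fun hNα z
  rw [nijenhuisTwist_apply N f, ← hg]
  simp only [nijenhuisTwist_apply, nijenhuisTwist₃_apply, map_add, map_sub, LinearMap.add_apply,
    LinearMap.sub_apply, hα] at hf ⊢
  rw [hf]
  abel

end Twist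

section Graded

variable {ℬ : G → Submodule K V} {ε : G → G → K} {μ br : V →ₗ[K] V →ₗ[K] V} {α N : V →ₗ[K] V}

/-- The Nijenhuis identity `N x ∘ N y = N (x ∘_N y)` for the operation `f`, required on homogeneous
elements only. -/
def IsNijenhuis (ℬ : G → Submodule K V) (N : V →ₗ[K] V) (f : V →ₗ[K] V →ₗ[K] V) : Prop :=
  ∀ ⦃a b : G⦄ ⦃x y : V⦄, x ∈ ℬ a → y ∈ ℬ b → f (N x) (N y) = N (nijenhuisTwist N f x y)

theorem IsEvenBilinear.nijenhuisTwist (hμ : IsEvenBilinear ℬ μ) (hN : IsEvenLinear ℬ N) :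
    IsEvenBilinear ℬ (nijenhuisTwist N μ) := fun _ _ _ _ hx hy =>
  sub_mem (add_mem (hμ (hN hx) hy) (hμ hx (hN hy))) (hN (hμ hx hy))

theorem IsHomAssociativeColor.nijenhuisTwist (hA : IsHomAssociativeColor ℬ ε μ α)
    (hN : IsEvenLinear ℬ N) (hNα : N.comp α = α.comp N) (hNμ : IsNijenhuis ℬ N μ) :
    IsHomAssociativeColor ℬ ε (nijenhuisTwist N μ) α := by
  obtain ⟨hε, hμ, hα, hassoc⟩ := hA
  refine ⟨hε, hμ.nijenhuisTwist hN, hα, fun a b c x y z hx hy hz => ?_⟩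
  rw [nijenhuisTwist_comp_right μ μ hNα (hNμ (hα hx) (hμ hy hz)) (hNμ hy hz),
    nijenhuisTwist_comp_left μ μ hNα (hNμ (hμ hx hy) (hα hz)) (hNμ hx hy)]
  exact nijenhuisTwist₃_congr (@hN a) (@hN b) (@hN c)
    (fun _ hx _ hy _ hz => hassoc hx hy hz) hx hy hz

theorem nijenhuisTwist_jacobi (hbr : IsEvenBilinear ℬ br) (hα : IsEvenLinear ℬ α)
    (hN : IsEvenLinear ℬ N) (hNα : N.comp α = α.comp N) (hNbr : IsNijenhuis ℬ N br)
    (hjacobi : ∀ ⦃a b c : G⦄ ⦃x y z : V⦄, x ∈ ℬ a → y ∈ ℬ b → z ∈ ℬ c →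
      ε c a • br (α x) (br y z) + ε a b • br (α y) (br z x) + ε b c • br (α z) (br x y) = 0)
    {a b c : G} {x y z : V} (hx : x ∈ ℬ a) (hy : y ∈ ℬ b) (hz : z ∈ ℬ c) :
    ε c a • nijenhuisTwist N br (α x) (nijenhuisTwist N br y z) +
      ε a b • nijenhuisTwist N br (α y) (nijenhuisTwist N br z x) +
        ε b c • nijenhuisTwist N br (α z) (nijenhuisTwist N br x y) = 0 := by
  let F : V → V → V → V := fun x y z => br (α x) (br y z)
  have twist_eq {a b c : G} {x y z : V} (hx : x ∈ ℬ a) (hy : y ∈ ℬ b) (hz : z ∈ ℬ c) :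
      nijenhuisTwist N br (α x) (nijenhuisTwist N br y z) = nijenhuisTwist₃ N F x y z :=
    nijenhuisTwist_comp_right br br hNα (hNbr (hα hx) (hbr hy hz)) (hNbr hy hz)
  calc
    _ = nijenhuisTwist₃ N (ε c a • F + ε a b • (fun x y z => F y z x) +
          ε b c • (fun x y z => F z x y)) x y z := by
      simp only [map_add, map_smul, Pi.add_apply, Pi.smul_apply]
      rw [twist_eq hx hy hz, twist_eq hy hz hx, twist_eq hz hx hy, nijenhuisTwist₃_rotate N F,
        nijenhuisTwist₃_rotate N (fun x y z => F y z x), nijenhuisTwist₃_rotate N F]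
    _ = nijenhuisTwist₃ N 0 x y z :=
      nijenhuisTwist₃_congr (@hN a) (@hN b) (@hN c)
        (fun _ hx _ hy _ hz => hjacobi hx hy hz) hx hy hz
    _ = 0 := by rw [map_zero]; rfl

theorem IsHomLieColor.nijenhuisTwist (hL : IsHomLieColor ℬ ε br α)
    (hN : IsEvenLinear ℬ N) (hNα : N.comp α = α.comp N) (hNbr : IsNijenhuis ℬ N br) :
    IsHomLieColor ℬ ε (nijenhuisTwist N br) α := by
  obtain ⟨hε, hbr, hα, hskew, hjacobi⟩ := hL
  refine ⟨hε, hbr.nijenhuisTwist hN, hα, fun a b x y hx hy => ?_,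
    fun _ _ _ _ _ _ => nijenhuisTwist_jacobi hbr hα hN hNα hNbr hjacobi⟩
  rw [nijenhuisTwist_apply, nijenhuisTwist_apply, hskew (hN hx) hy, hskew hx (hN hy), hskew hx hy,
    map_neg, map_smul]
  module

theorem nijenhuisTwist_leibniz (hμ : IsEvenBilinear ℬ μ) (hbr : IsEvenBilinear ℬ br)
    (hα : IsEvenLinear ℬ α) (hN : IsEvenLinear ℬ N) (hNα : N.comp α = α.comp N)
    (hNμ : IsNijenhuis ℬ N μ) (hNbr : IsNijenhuis ℬ N br)
    (hleibniz : ∀ ⦃a b c : G⦄ ⦃x y z : V⦄, x ∈ ℬ a → y ∈ ℬ b → z ∈ ℬ c →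
      br (α x) (μ y z) = μ (br x y) (α z) + ε a b • μ (α y) (br x z))
    {a b c : G} {x y z : V} (hx : x ∈ ℬ a) (hy : y ∈ ℬ b) (hz : z ∈ ℬ c) :
    nijenhuisTwist N br (α x) (nijenhuisTwist N μ y z) =
      nijenhuisTwist N μ (nijenhuisTwist N br x y) (α z) +
        ε a b • nijenhuisTwist N μ (α y) (nijenhuisTwist N br x z) := by
  let F : V → V → V → V := fun x y z => μ (br x y) (α z)
  let H : V → V → V → V := fun y x z => μ (α y) (br x z)
  calc
    _ = nijenhuisTwist₃ N (fun x y z => br (α x) (μ y z)) x y z :=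
      nijenhuisTwist_comp_right br μ hNα (hNbr (hα hx) (hμ hy hz)) (hNμ hy hz)
    _ = nijenhuisTwist₃ N (F + ε a b • (fun x y z => H y x z)) x y z :=
      nijenhuisTwist₃_congr (@hN a) (@hN b) (@hN c)
        (fun _ hx _ hy _ hz => hleibniz hx hy hz) hx hy hz
    _ = nijenhuisTwist₃ N F x y z + ε a b • nijenhuisTwist₃ N H y x z := by
      simp only [map_add, map_smul, Pi.add_apply, Pi.smul_apply, nijenhuisTwist₃_swap N H]
    _ = _ := by
      rw [nijenhuisTwist_comp_left μ br hNα (hNμ (hbr hx hy) (hα hz)) (hNbr hx hy),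
        nijenhuisTwist_comp_right μ br hNα (hNμ (hα hy) (hbr hx hz)) (hNbr hx hz)]

theorem IsHomPoissonColor.nijenhuisTwist (hP : IsHomPoissonColor ℬ ε μ br α)
    (hN : IsEvenLinear ℬ N) (hNα : N.comp α = α.comp N) (hNμ : IsNijenhuis ℬ N μ)
    (hNbr : IsNijenhuis ℬ N br) :
    IsHomPoissonColor ℬ ε (nijenhuisTwist N μ) (nijenhuisTwist N br) α := by
  obtain ⟨hA, hL, hleibniz⟩ := hP
  have ⟨_, hμ, hα, _⟩ := hA
  have ⟨_, hbr, _⟩ := hL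
  exact ⟨hA.nijenhuisTwist hN hNα hNμ, hL.nijenhuisTwist hN hNα hNbr,
    fun _ _ _ _ _ _ => nijenhuisTwist_leibniz hμ hbr hα hN hNα hNμ hNbr hleibniz⟩

end Graded

/-- twisting a Hom-Poisson color algebra by a Nijenhuis operator
`N`, via `x ·_N y = N(x)·y + x·N(y) − N(x·y)` and
`[x, y]_N = [N(x), y] + [x, N(y)] − N([x, y])`, yields a Hom-Poisson color
algebra, and `N` is a morphism from the twisted algebra onto the original one. -/
theorem stmt9 (ℬ : G → Submodule K V) (ε : G → G → K)
    (μ br : V →ₗ[K] V →ₗ[K] V) (α : V →ₗ[K] V)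
    (hP : IsHomPoissonColor ℬ ε μ br α)
    (N : V →ₗ[K] V) (hNeven : IsEvenLinear ℬ N)
    (hNα : N.comp α = α.comp N)
    (hNμ : ∀ ⦃a b : G⦄ ⦃x y : V⦄, x ∈ ℬ a → y ∈ ℬ b →
      μ (N x) (N y) = N (μ (N x) y + μ x (N y) - N (μ x y)))
    (hNbr : ∀ ⦃a b : G⦄ ⦃x y : V⦄, x ∈ ℬ a → y ∈ ℬ b →
      br (N x) (N y) = N (br (N x) y + br x (N y) - N (br x y))) :
    IsHomPoissonColor ℬ ε (μ.comp N + μ.compl₂ N - μ.compr₂ N)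
        (br.comp N + br.compl₂ N - br.compr₂ N) α ∧
      (∀ ⦃a b : G⦄ ⦃x y : V⦄, x ∈ ℬ a → y ∈ ℬ b →
        N ((μ.comp N + μ.compl₂ N - μ.compr₂ N) x y) = μ (N x) (N y)) ∧
      (∀ ⦃a b : G⦄ ⦃x y : V⦄, x ∈ ℬ a → y ∈ ℬ b →
        N ((br.comp N + br.compl₂ N - br.compr₂ N) x y) = br (N x) (N y)) ∧
      N.comp α = α.comp N := by
  exact ⟨hP.nijenhuisTwist hNeven hNα hNμ hNbr, fun _ _ _ _ hx hy => (hNμ hx hy).symm,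
    fun _ _ _ _ hx hy => (hNbr hx hy).symm, hNα⟩
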